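/- arXiv:math/0412067 — 3 statements merged into one kernel-verified Lean document; each statement's English description precedes it below -/
import Mathlib

section
/- Let q be real with 0 < q < 1, let r ≥ 1 be an integer, let s, t ∈ ℂ with Re(t) > r − 1, and let z ∈ ℂ with Re(z) > 0. Then ζ_{q,r}(s,t,z) = ∑_{l=0}^{r−1} P^l_{q,r}(z) · ζ_{q,1}(s−l, t−l, z), where each series ζ_{q,1}(s−l, t−l, z) = ∑_{n≥0} q^{n(t−l)}/[n+z]_q^{s−l} converges absolutely because Re(t−l) > 0. -/
/-!
Write `N = n₁ + ⋯ + n_r` and `r = n + 1`. Collecting the tuples with a given `N`, the multiple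
series becomes `∑_N q^{Nt} / [N+z]^s · h_N(1, q⁻¹, …, q⁻ⁿ)`, where `h_N` is the complete homogeneous
symmetric polynomial; the rearrangement is legitimate because the norms sum to a convergent series.

* `antidiagonalTuple_eq_prod`: `h_N(1, q⁻¹, …, q⁻ⁿ) = ∏_{m=1}^n (q⁻ᴺ - q^m) / (1 - q^m)`, a
  `q`-binomial coefficient up to a power of `q`.
* `term_mul_prod`: since `q⁻ᴺ - q^m = (1 - q) (q⁻ᴺ [N+z] - q^m [z-m])`, expanding the product in
  powers of `q⁻ᴺ [N+z]` produces exactly the coefficients `P^l_{q,r}(z)`, and the `l`-th power turns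
  `q^{Nt} / [N+z]^s` into `q^{N(t-l)} / [N+z]^{s-l}`.
* `summable_term`: the one-variable series converge absolutely, as `[N+z]^{-s}` has a limit and
  `|q^t| < 1`.

The factor `h_N` is a nonnegative real, so the norm sum over the tuples with sum `N` is the norm of
the finite combination of one-variable terms; this gives summability over tuples for free.
-/

open Complex

/-- `[w]_q = (1 - q^w)/(1 - q)` for real `0 < q < 1` and complex `w`
(principal complex power of the positive real `q`). -/
noncomputable def qNum (q : ℝ) (w : ℂ) : ℂ := (1 - (q : ℂ) ^ w) / (1 - (q : ℂ))

/-- The q-factorial `[n]_q! = ∏_{k=1}^n [k]_q`. -/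
noncomputable def qFact (q : ℝ) (n : ℕ) : ℝ := ∏ k ∈ Finset.Icc 1 n, (1 - q ^ k) / (1 - q)

/-- The coefficient `P^l_{q,r}(z)`: for `0 ≤ l ≤ r−1`,
`P^l_{q,r}(z) = ((−1)^{r−1−l}/[r−1]_q!) ∑_{1 ≤ m₁ < ⋯ < m_{r−1−l} ≤ r−1}
q^{m₁+⋯+m_{r−1−l}} [z−m₁]_q ⋯ [z−m_{r−1−l}]_q`
(so that `P^{r−1}_{q,r}(z) = 1/[r−1]_q!`, the sum over the empty set being `1`). -/
noncomputable def Pq (q : ℝ) (r l : ℕ) (z : ℂ) : ℂ :=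
  ((-1 : ℂ) ^ (r - 1 - l) / (qFact q (r - 1) : ℂ)) *
    ∑ A ∈ Finset.powersetCard (r - 1 - l) (Finset.Icc 1 (r - 1)),
      (q : ℂ) ^ (∑ m ∈ A, m) * ∏ m ∈ A, qNum q (z - (m : ℕ))

/-- The `q`-analogue `ζ_{q,r}(s,t,z)` of the Barnes multiple zeta function,
defined as a sum over all `r`-tuples `(n₁,…,n_r)` of nonnegative integers of
`q^{n₁ t + n₂(t−1) + ⋯ + n_r(t−r+1)} / [n₁+⋯+n_r+z]_q^s`. -/
noncomputable def zetaQ (q : ℝ) (r : ℕ) (s t z : ℂ) : ℂ :=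
  ∑' f : Fin r → ℕ,
    (q : ℂ) ^ (∑ i : Fin r, (f i : ℂ) * (t - (i : ℕ)))
      / (qNum q (((∑ i : Fin r, f i : ℕ) : ℂ) + z)) ^ s

/-- Recursion `h_N(1, p, …, p^r) = ∑_{k ≤ N} p^k h_k(1, p, …, p^{r-1})`, obtained by splitting off the
first entry of the tuple; the remaining entries have sum `k` and their weights shift by one. -/
theorem antidiagonalTuple_sum {K : Type*} [Field K] (p : K) (r N : ℕ) :
    ∑ f ∈ Finset.Nat.antidiagonalTuple (r + 1) N, p ^ (∑ i : Fin _, (i : ℕ) * f i) =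
      ∑ k ∈ Finset.range (N + 1), p ^ k *
        ∑ f ∈ Finset.Nat.antidiagonalTuple r k, p ^ (∑ i : Fin _, (i : ℕ) * f i) := by
  have h : Finset.Nat.antidiagonalTuple (r + 1) N =
      (Finset.HasAntidiagonal.antidiagonal N).biUnion (fun a =>
        (Finset.Nat.antidiagonalTuple r a.2).image (Fin.cons (α := fun _ => ℕ) a.1)) := by
    ext f
    simp only [Finset.Nat.mem_antidiagonalTuple, Finset.mem_biUnion, Finset.HasAntidiagonal.mem_antidiagonal,
      Finset.mem_image, Fin.sum_univ_succ]
    constructor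
    · intro hf
      exact ⟨(f 0, ∑ i : Fin r, f i.succ), hf, fun i => f i.succ, rfl, Fin.cons_self_tail f⟩
    · rintro ⟨a, ha, g, hg, rfl⟩
      simp [hg, ha]
  rw [h, Finset.sum_biUnion]
  · rw [Finset.Nat.sum_antidiagonal_eq_sum_range_succ_mk, ← Finset.sum_range_reflect]
    refine Finset.sum_congr rfl fun k hk => ?_
    have hk' : k ≤ N := by simpa [Nat.lt_succ_iff] using hk
    rw [Finset.sum_image (fun _ _ _ _ e => (Fin.cons_injective2 e).2), Finset.mul_sum]
    have e : N - (N + 1 - 1 - k) = k := by omega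
    simp only [e]
    refine Finset.sum_congr rfl fun g hg => ?_
    rw [Finset.Nat.mem_antidiagonalTuple] at hg
    rw [← pow_add, Fin.sum_univ_succ]
    simp [add_mul, Finset.sum_add_distrib, hg, add_comm]
  · intro a ha b hb hab
    rw [Function.onFun, Finset.disjoint_left]
    intro f hf hf'
    simp only [Finset.mem_image] at hf hf'
    obtain ⟨g, -, rfl⟩ := hf
    obtain ⟨g', -, e⟩ := hf'
    have h1 := (Fin.cons_injective2 e).1
    simp only [SetLike.mem_coe, Finset.HasAntidiagonal.mem_antidiagonal] at ha hb
    exact hab (Prod.ext h1.symm (by omega))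

/-- Closed form of `h_N(1, q⁻¹, …, q⁻ʳ)`. With `y = q⁻⁽ᴺ⁺¹⁾` the induction on `N` rests on
`(y - q^{r+1}) - q^{r+1} (y - 1) = y (1 - q^{r+1})`. -/
theorem antidiagonalTuple_eq_prod {K : Type*} [Field K] (q : K) (hq : q ≠ 0)
    (hq1 : ∀ m : ℕ, 1 ≤ m → 1 - q ^ m ≠ 0) (r N : ℕ) :
    ∑ f ∈ Finset.Nat.antidiagonalTuple (r + 1) N, q⁻¹ ^ (∑ i : Fin _, (i : ℕ) * f i) =
      ∏ m ∈ Finset.Icc 1 r, (q⁻¹ ^ N - q ^ m) / (1 - q ^ m) := by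
  induction r generalizing N with
  | zero => simp [Finset.Nat.antidiagonalTuple_one]
  | succ r ih =>
    rw [antidiagonalTuple_sum]
    simp only [ih]
    induction N with
    | zero =>
      have h : ∀ r : ℕ, ∏ m ∈ Finset.Icc 1 r, (q⁻¹ ^ 0 - q ^ m) / (1 - q ^ m) = 1 := fun r =>
        Finset.prod_eq_one fun m hm => by
          rw [pow_zero, div_self (hq1 m (Finset.mem_Icc.1 hm).1)]
      rw [Finset.sum_range_one, h, h]; simp
    | succ N ihN =>
      rw [Finset.sum_range_succ, ihN]
      simp only [Finset.prod_div_distrib]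
      have hD : ∏ m ∈ Finset.Icc 1 r, (1 - q ^ m) ≠ 0 :=
        Finset.prod_ne_zero_iff.2 fun m hm => hq1 m (Finset.mem_Icc.1 hm).1
      have hy : q⁻¹ ^ N = q * q⁻¹ ^ (N + 1) := by
        rw [pow_succ]; field_simp
      have hshift : ∏ m ∈ Finset.Icc 1 (r + 1), (q⁻¹ ^ N - q ^ m) =
          q ^ (r + 1) * ((q⁻¹ ^ (N + 1) - 1) *
            ∏ m ∈ Finset.Icc 1 r, (q⁻¹ ^ (N + 1) - q ^ m)) := by
        rw [hy]
        generalize q⁻¹ ^ (N + 1) = y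
        clear * -
        induction r with
        | zero => simp; ring
        | succ r ih =>
          rw [Finset.prod_Icc_succ_top (by omega), ih, Finset.prod_Icc_succ_top (by omega)]
          ring
      have h1 := hq1 (r + 1) (by omega)
      rw [hshift, Finset.prod_Icc_succ_top (by omega), Finset.prod_Icc_succ_top (by omega)]
      generalize q⁻¹ ^ (N + 1) = y at *
      field_simp
      ring

/-- Expansion of `∏ (x - b m)` in powers of `x`, with the elementary symmetric functions of the `b m`
written as sums over subsets, as in the definition of `Pq`. -/
theorem prod_sub_eq_sum {K : Type*} [Field K] (n : ℕ) (x : K) (b : ℕ → K) :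
    ∏ m ∈ Finset.Icc 1 n, (x - b m) =
      ∑ l ∈ Finset.range (n + 1), (-1) ^ (n - l) *
        (∑ A ∈ Finset.powersetCard (n - l) (Finset.Icc 1 n), ∏ m ∈ A, b m) * x ^ l := by
  have h : ∀ m, x - b m = -b m + x := fun m => by ring
  simp only [h]
  rw [Finset.prod_add, Finset.sum_powerset, ← Finset.sum_range_reflect]
  simp only [Nat.card_Icc, Nat.add_sub_cancel]
  refine Finset.sum_congr rfl fun l hl => ?_
  have hl' : l ≤ n := by simpa [Nat.lt_succ_iff] using hl
  rw [Finset.mul_sum, Finset.sum_mul]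
  refine Finset.sum_congr rfl fun A hA => ?_
  rw [Finset.mem_powersetCard] at hA
  rw [Finset.prod_neg, Finset.prod_const, Finset.card_sdiff_of_subset hA.1, hA.2, Nat.card_Icc]
  congr 2
  omega

theorem norm_cpow_lt_one {q : ℝ} (hq0 : 0 < q) (hq1 : q < 1) {w : ℂ} (hw : 0 < w.re) :
    ‖(q : ℂ) ^ w‖ < 1 := by
  rw [Complex.norm_cpow_eq_rpow_re_of_pos hq0]
  exact Real.rpow_lt_one hq0.le hq1 hw

theorem qNum_ne_zero {q : ℝ} (hq0 : 0 < q) (hq1 : q < 1) {w : ℂ} (hw : 0 < w.re) : qNum q w ≠ 0 := by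
  have h1 : (1 : ℂ) - q ≠ 0 := by
    rw [sub_ne_zero]; exact_mod_cast hq1.ne'
  refine div_ne_zero (fun h => ?_) h1
  have := norm_cpow_lt_one hq0 hq1 hw
  rw [← sub_eq_zero.1 h] at this
  simp at this

theorem summable_term {q : ℝ} (hq0 : 0 < q) (hq1 : q < 1) (s t z : ℂ) (ht : 0 < t.re) :
    Summable (fun n : ℕ => ‖(q : ℂ) ^ ((n : ℂ) * t) / (qNum q ((n : ℂ) + z)) ^ s‖) := by
  have hq : (q : ℂ) ≠ 0 := by exact_mod_cast hq0.ne'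
  have hlim : Filter.Tendsto (fun n : ℕ => qNum q ((n : ℂ) + z)) Filter.atTop
      (nhds ((((1 - q)⁻¹ : ℝ)) : ℂ)) := by
    have h0 : Filter.Tendsto (fun n : ℕ => (q : ℂ) ^ n * (q : ℂ) ^ z) Filter.atTop (nhds 0) := by
      have := (tendsto_pow_atTop_nhds_zero_of_norm_lt_one (x := (q : ℂ))
        (by simpa [abs_of_pos hq0] using hq1)).mul_const ((q : ℂ) ^ z)
      simpa using this
    have := (h0.const_sub 1).div_const (1 - (q : ℂ))
    simp only [qNum, Complex.cpow_add _ _ hq, Complex.cpow_natCast]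
    simpa using this
  have hpos : 0 < (1 - q)⁻¹ := inv_pos.2 (by linarith)
  have hlim2 : Filter.Tendsto (fun n : ℕ => ((qNum q ((n : ℂ) + z)) ^ s)⁻¹) Filter.atTop
      (nhds (((((1 - q)⁻¹ : ℝ)) : ℂ) ^ s)⁻¹) := by
    refine Filter.Tendsto.inv₀ (hlim.cpow tendsto_const_nhds ?_) ?_
    · exact Complex.ofReal_mem_slitPlane.2 hpos
    · rw [Complex.cpow_ne_zero_iff]
      left; exact_mod_cast hpos.ne'
  have hO := hlim2.isBigO_one ℝ
  have hgeo : Summable (fun n : ℕ => ‖(q : ℂ) ^ t‖ ^ n) :=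
    summable_geometric_of_lt_one (norm_nonneg _) (norm_cpow_lt_one hq0 hq1 ht)
  refine (summable_of_isBigO_nat hgeo ?_)
  rw [Asymptotics.isBigO_norm_left]
  have h1 : (fun n : ℕ => (q : ℂ) ^ ((n : ℂ) * t)) =O[Filter.atTop]
      (fun n : ℕ => ‖(q : ℂ) ^ t‖ ^ n) :=
    Asymptotics.isBigO_of_le _ fun n => by
      rw [Complex.cpow_nat_mul, norm_pow]; simp
  simpa [div_eq_mul_inv] using h1.mul hO

theorem one_sub_pow_ne_zero {q : ℝ} (hq0 : 0 < q) (hq1 : q < 1) {m : ℕ} (hm : 1 ≤ m) : 1 - q ^ m ≠ 0 :=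
  (sub_pos.2 (pow_lt_one₀ hq0.le hq1 (by omega))).ne.symm

/-- The term of index `N` of the collected series is the combination, with coefficients
`Pq q (n + 1) l z`, of the terms of index `N` of the one-variable series. -/
theorem term_mul_prod {q : ℝ} (hq0 : 0 < q) (hq1 : q < 1) (n N : ℕ) (s t z : ℂ) (hz : 0 < z.re) :
    (q : ℂ) ^ ((N : ℂ) * t) / (qNum q ((N : ℂ) + z)) ^ s *
        ∏ m ∈ Finset.Icc 1 n, ((q : ℂ)⁻¹ ^ N - (q : ℂ) ^ m) / (1 - (q : ℂ) ^ m) =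
      ∑ l ∈ Finset.range (n + 1), Pq q (n + 1) l z *
        ((q : ℂ) ^ ((N : ℂ) * (t - (l : ℂ))) / (qNum q ((N : ℂ) + z)) ^ (s - (l : ℂ))) := by
  have hq : (q : ℂ) ≠ 0 := by exact_mod_cast hq0.ne'
  have h1q : (1 : ℂ) - q ≠ 0 := by
    rw [sub_ne_zero]; exact_mod_cast hq1.ne'
  have hX : qNum q ((N : ℂ) + z) ≠ 0 :=
    qNum_ne_zero hq0 hq1 (by simp; positivity)
  have key : ∀ m : ℕ, ((q : ℂ)⁻¹ ^ N - (q : ℂ) ^ m) / (1 - (q : ℂ) ^ m) =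
      ((q : ℂ)⁻¹ ^ N * qNum q ((N : ℂ) + z) - (q : ℂ) ^ m * qNum q (z - (m : ℕ))) /
        ((1 - (q : ℂ) ^ m) / (1 - q)) := by
    intro m
    have : ((q : ℂ)⁻¹ ^ N * qNum q ((N : ℂ) + z) - (q : ℂ) ^ m * qNum q (z - (m : ℕ))) =
      ((q : ℂ)⁻¹ ^ N - (q : ℂ) ^ m) / (1 - q) := by
      simp only [qNum, Complex.cpow_add _ _ hq, Complex.cpow_sub _ _ hq, Complex.cpow_natCast,
        inv_pow]
      field_simp
      ring
    rw [this, div_div_div_cancel_right₀ h1q]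
  simp only [key]
  rw [Finset.prod_div_distrib, prod_sub_eq_sum, Finset.sum_div, Finset.mul_sum]
  refine Finset.sum_congr rfl fun l hl => ?_
  have hF : ∏ m ∈ Finset.Icc 1 n, ((1 - (q : ℂ) ^ m) / (1 - q)) = (qFact q n : ℂ) := by
    simp [qFact]
  have hterm : (q : ℂ) ^ ((N : ℂ) * (t - (l : ℂ))) / (qNum q ((N : ℂ) + z)) ^ (s - (l : ℂ)) =
      (q : ℂ) ^ ((N : ℂ) * t) / (qNum q ((N : ℂ) + z)) ^ s *
        ((q : ℂ)⁻¹ ^ N * qNum q ((N : ℂ) + z)) ^ l := by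
    have hXs : (qNum q ((N : ℂ) + z)) ^ s ≠ 0 := by
      rw [Complex.cpow_ne_zero_iff]; exact Or.inl hX
    rw [mul_sub, Complex.cpow_sub _ _ hq, Complex.cpow_sub _ _ hX, Complex.cpow_natCast,
      ← Nat.cast_mul, Complex.cpow_natCast, mul_pow, ← pow_mul, inv_pow]
    field_simp
  rw [hF, hterm]
  simp only [Pq, Nat.add_sub_cancel, Finset.prod_mul_distrib, ← Finset.prod_pow_eq_pow_sum]
  ring

theorem tuple_term {q : ℝ} (hq0 : 0 < q) (r : ℕ) (f : Fin r → ℕ) (t : ℂ) :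
    (q : ℂ) ^ (∑ i : Fin r, (f i : ℂ) * (t - (i : ℕ))) =
      (q : ℂ) ^ (((∑ i, f i : ℕ) : ℂ) * t) * (q : ℂ)⁻¹ ^ (∑ i : Fin _, (i : ℕ) * f i) := by
  have hq : (q : ℂ) ≠ 0 := by exact_mod_cast hq0.ne'
  have : ∑ i : Fin r, (f i : ℂ) * (t - (i : ℕ)) =
      ((∑ i, f i : ℕ) : ℂ) * t - ((∑ i : Fin _, (i : ℕ) * f i : ℕ) : ℂ) := by
    push_cast
    rw [Finset.sum_mul, ← Finset.sum_sub_distrib]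
    exact Finset.sum_congr rfl fun i _ => by ring
  rw [this, Complex.cpow_sub _ _ hq, Complex.cpow_natCast, inv_pow, div_eq_mul_inv]

/-- For `0 < q < 1`, `r ≥ 1`, `Re t > r − 1`, `Re z > 0`:
`ζ_{q,r}(s,t,z) = ∑_{l=0}^{r−1} P^l_{q,r}(z) ζ_{q,1}(s−l, t−l, z)`,
where each series `ζ_{q,1}(s−l,t−l,z) = ∑_{n≥0} q^{n(t−l)}/[n+z]_q^{s−l}`
converges absolutely (since `Re(t−l) > 0`). -/
theorem zetaQ_eq_sum_Pq_zetaQ_one (q : ℝ) (hq0 : 0 < q) (hq1 : q < 1) (r : ℕ) (hr : 1 ≤ r)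
    (s t z : ℂ) (ht : (r : ℝ) - 1 < t.re) (hz : 0 < z.re) :
    (∀ l < r, Summable (fun n : ℕ =>
      ‖(q : ℂ) ^ ((n : ℂ) * (t - (l : ℂ))) / (qNum q ((n : ℂ) + z)) ^ (s - (l : ℂ))‖)) ∧
    zetaQ q r s t z
      = ∑ l ∈ Finset.range r, Pq q r l z *
          ∑' n : ℕ, (q : ℂ) ^ ((n : ℂ) * (t - (l : ℂ))) / (qNum q ((n : ℂ) + z)) ^ (s - (l : ℂ)) := by
  obtain ⟨n, rfl⟩ : ∃ n, r = n + 1 := ⟨r - 1, by omega⟩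
  have hsum : ∀ l < n + 1, Summable (fun N : ℕ =>
      ‖(q : ℂ) ^ ((N : ℂ) * (t - (l : ℂ))) / (qNum q ((N : ℂ) + z)) ^ (s - (l : ℂ))‖) := by
    intro l hl
    refine summable_term hq0 hq1 _ _ _ ?_
    have : (l : ℝ) ≤ n := by exact_mod_cast Nat.lt_succ_iff.1 hl
    push_cast at ht
    simp only [Complex.sub_re, Complex.natCast_re]
    linarith
  refine ⟨hsum, ?_⟩
  have hsumP : ∀ l ∈ Finset.range (n + 1), Summable (fun N : ℕ => Pq q (n + 1) l z *
      ((q : ℂ) ^ ((N : ℂ) * (t - (l : ℂ))) / (qNum q ((N : ℂ) + z)) ^ (s - (l : ℂ)))) :=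
    fun l hl => (hsum l (Finset.mem_range.1 hl)).of_norm.mul_left _
  set F : ℕ → ℂ := fun N => (q : ℂ) ^ ((N : ℂ) * t) / (qNum q ((N : ℂ) + z)) ^ s with hF
  -- the number `h_N(1, q⁻¹, …, q⁻ⁿ)`, as a real and as a complex number
  have hW : ∀ N : ℕ, ((∑ f ∈ Finset.Nat.antidiagonalTuple (n + 1) N,
      q⁻¹ ^ (∑ i : Fin _, (i : ℕ) * f i) : ℝ) : ℂ) =
      ∏ m ∈ Finset.Icc 1 n, ((q : ℂ)⁻¹ ^ N - (q : ℂ) ^ m) / (1 - (q : ℂ) ^ m) := by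
    intro N
    rw [antidiagonalTuple_eq_prod q hq0.ne' (fun m hm => one_sub_pow_ne_zero hq0 hq1 hm)]
    simp
  have hFW : ∀ N : ℕ, F N * ((∑ f ∈ Finset.Nat.antidiagonalTuple (n + 1) N,
      q⁻¹ ^ (∑ i : Fin _, (i : ℕ) * f i) : ℝ) : ℂ) = ∑ l ∈ Finset.range (n + 1), Pq q (n + 1) l z *
        ((q : ℂ) ^ ((N : ℂ) * (t - (l : ℂ))) / (qNum q ((N : ℂ) + z)) ^ (s - (l : ℂ))) := by
    intro N
    rw [hW]
    exact term_mul_prod hq0 hq1 n N s t z hz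
  let e := Finset.Nat.sigmaAntidiagonalTupleEquivTuple (n + 1)
  let T : (Fin (n + 1) → ℕ) → ℂ := fun f =>
    (q : ℂ) ^ (∑ i : Fin (n + 1), (f i : ℂ) * (t - (i : ℕ)))
      / (qNum q (((∑ i : Fin (n + 1), f i : ℕ) : ℂ) + z)) ^ s
  have hT : ∀ x, T (e x) = F x.1 * ((q⁻¹ ^ (∑ i : Fin _, (i : ℕ) * x.2.1 i) : ℝ) : ℂ) := by
    rintro ⟨N, f, hf⟩
    have hf' := Finset.Nat.mem_antidiagonalTuple.1 hf
    change T f = _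
    simp only [T, tuple_term hq0, hf', hF]
    push_cast
    ring
  have hnorm : ∀ x, ‖T (e x)‖ = ‖F x.1‖ * (q⁻¹ ^ (∑ i : Fin _, (i : ℕ) * x.2.1 i)) := by
    intro x
    rw [hT, norm_mul, Complex.norm_of_nonneg (by positivity)]
  have hS : Summable (fun x => T (e x)) := by
    apply Summable.of_norm
    rw [summable_sigma_of_nonneg (fun _ => norm_nonneg _)]
    refine ⟨fun N => (hasSum_fintype _).summable, ?_⟩
    -- the sum of the norms over a fibre is `‖F N‖ h_N`, i.e. the norm of `F N * h_N`
    have hfib : ∀ N : ℕ, ∑' x, ‖T (e ⟨N, x⟩)‖ =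
        ‖∑ l ∈ Finset.range (n + 1), Pq q (n + 1) l z *
        ((q : ℂ) ^ ((N : ℂ) * (t - (l : ℂ))) / (qNum q ((N : ℂ) + z)) ^ (s - (l : ℂ)))‖ := by
      intro N
      rw [← hFW, norm_mul, Complex.norm_of_nonneg (Finset.sum_nonneg fun _ _ => by positivity)]
      simp only [hnorm]
      rw [tsum_fintype, ← Finset.mul_sum]
      congr 1
      exact Finset.sum_coe_sort (Finset.Nat.antidiagonalTuple (n + 1) N)
        (fun f => q⁻¹ ^ (∑ i : Fin _, (i : ℕ) * f i))
    simp only [hfib]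
    exact (summable_sum hsumP).norm
  calc zetaQ q (n + 1) s t z = ∑' x, T (e x) := (e.tsum_eq T).symm
    _ = ∑' N : ℕ, ∑' x, T (e ⟨N, x⟩) := hS.tsum_sigma
    _ = ∑' N : ℕ, ∑ l ∈ Finset.range (n + 1), Pq q (n + 1) l z *
        ((q : ℂ) ^ ((N : ℂ) * (t - (l : ℂ))) / (qNum q ((N : ℂ) + z)) ^ (s - (l : ℂ))) := by
      refine tsum_congr fun N => ?_
      rw [← hFW]
      simp only [hT]
      rw [tsum_fintype, ← Finset.mul_sum, ← Complex.ofReal_sum]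
      congr 2
      exact Finset.sum_coe_sort (Finset.Nat.antidiagonalTuple (n + 1) N)
        (fun f => q⁻¹ ^ (∑ i : Fin _, (i : ℕ) * f i))
    _ = _ := by
      rw [Summable.tsum_finsetSum hsumP]
      exact Finset.sum_congr rfl fun l _ => tsum_mul_left
end

section
/- Let r ≥ 1 and ν ≥ 1 be integers, let z ∈ ℂ with Re(z) > 0, and let s ∈ ℂ with Re(s) > r − 1 + ν. Then lim_{q → 1⁻} ζ_{q,r}(s, s−ν, z) = ζ_r(s,z), the limit being taken over real q increasing to 1 (all series involved converge absolutely in this range of parameters). -/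
/-!
The limit is taken termwise, by dominated convergence for series.

Termwise, `[w]_q → w` as `q → 1`, being a difference quotient of `q ↦ q^w` at `q = 1`, and
`q^e → 1`, so each summand of `zetaQ` tends to the corresponding summand of `zetaBarnes`.

For the domination, write `N = n₁ + ⋯ + n_r`, `M = N + Re z`, `σ = Re s` and
`δ = σ - ν - (r - 1) > 0`. The numerator has norm at most `q^{Nδ}`, and
`‖[N + z]_q‖ ≥ (1 - q^M)/(1 - q)`. With `a = δ/σ` and `u = -M log q`, the elementary estimate
`q^{aM} (1 - q)/(1 - q^M) ≤ e^{-au} u / ((1 - e^{-u}) M) ≤ (1 + 1/a)/M`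
(`rpow_mul_one_sub_div_le`), raised to the power `σ`, bounds the summand by a constant times
`M^{-σ}`, uniformly in `q ∈ [1/2, 1)` (`norm_summand_le`). Since `σ > r`, this majorant is
summable over `r`-tuples, by comparison with `∏ᵢ (nᵢ + Re z)^{-σ/r}` (`summable_sum_add_rpow`).
-/

open Complex

/-- The Barnes multiple zeta function `ζ_r(s,z) = ∑_{n₁,…,n_r ≥ 0} (n₁+⋯+n_r+z)^{−s}`
(principal complex powers). -/
noncomputable def zetaBarnes (r : ℕ) (s z : ℂ) : ℂ :=
  ∑' f : Fin r → ℕ, (((∑ i : Fin r, f i : ℕ) : ℂ) + z) ^ (-s)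

theorem summable_pi_prod {g : ℕ → ℝ} (hg : Summable g) (hg0 : ∀ n, 0 ≤ g n) (r : ℕ) :
    Summable (fun f : Fin r → ℕ => ∏ i, g (f i)) := by
  induction r with
  | zero => exact Summable.of_finite
  | succ r ih =>
    rw [← (Fin.consEquiv (fun _ : Fin (r + 1) => ℕ)).summable_iff]
    have h := hg.mul_of_nonneg ih hg0 (fun f => Finset.prod_nonneg fun i _ => hg0 (f i))
    refine h.congr fun p => ?_
    simp [Fin.consEquiv, Fin.prod_univ_succ]

theorem summable_sum_add_rpow {r : ℕ} (hr : 1 ≤ r) {x σ : ℝ} (hx : 0 < x) (hσ : (r : ℝ) < σ) :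
    Summable (fun f : Fin r → ℕ => (((∑ i, f i : ℕ) : ℝ) + x) ^ (-σ)) := by
  have hr0 : (0 : ℝ) < r := by exact_mod_cast hr
  have h1 : Summable (fun n : ℕ => ((n : ℝ) + x) ^ (-(σ / r))) := by
    have h := (Real.summable_one_div_nat_add_rpow x (σ / r)).2 ((one_lt_div hr0).2 hσ)
    refine h.congr fun n => ?_
    have : (0 : ℝ) < n + x := by positivity
    rw [abs_of_pos this, Real.rpow_neg this.le, one_div]
  refine Summable.of_nonneg_of_le (fun f => by positivity) (fun f => ?_)
    (summable_pi_prod h1 (fun n => by positivity) r)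
  have hM : (0 : ℝ) < ((∑ i, f i : ℕ) : ℝ) + x := by positivity
  have h2 : (((∑ i, f i : ℕ) : ℝ) + x) ^ (-σ)
      = ∏ _i : Fin r, (((∑ i, f i : ℕ) : ℝ) + x) ^ (-(σ / r)) := by
    rw [Finset.prod_const, Finset.card_univ, Fintype.card_fin, ← Real.rpow_natCast,
      ← Real.rpow_mul hM.le]
    congr 1
    field_simp
  rw [h2]
  refine Finset.prod_le_prod (fun i _ => by positivity) fun i _ => ?_
  refine Real.rpow_le_rpow_of_nonpos (by positivity) ?_ ?_
  · have : f i ≤ ∑ i, f i := Finset.single_le_sum (fun _ _ => Nat.zero_le _) (Finset.mem_univ i)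
    have : (f i : ℝ) ≤ ((∑ i, f i : ℕ) : ℝ) := by exact_mod_cast this
    linarith
  · have : 0 < σ / r := div_pos (hr0.trans hσ) hr0
    linarith

/-- The bound uniform in `q` behind the domination: the factor `q^{aM}` absorbs the growth of
`M (1 - q)/(1 - q^M)` when `M (1 - q)` is large. -/
theorem rpow_mul_one_sub_div_le {q M a : ℝ} (hq0 : 0 < q) (hq1 : q < 1) (hM : 0 < M)
    (ha : 0 < a) : q ^ (a * M) * ((1 - q) / (1 - q ^ M)) ≤ (1 + 1 / a) / M := by
  have hlog : Real.log q ≤ q - 1 := Real.log_le_sub_one_of_pos hq0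
  obtain ⟨u, hu⟩ : ∃ u, u = -(Real.log q * M) := ⟨_, rfl⟩
  have hu0 : 0 < u := by
    rw [hu]
    have : Real.log q < 0 := Real.log_neg hq0 hq1
    nlinarith
  have hMu : M * (1 - q) ≤ u := by rw [hu]; nlinarith
  have e1 : q ^ M = (Real.exp u)⁻¹ := by
    rw [Real.rpow_def_of_pos hq0, hu, Real.exp_neg, inv_inv]
  have e2 : q ^ (a * M) = (Real.exp (a * u))⁻¹ := by
    rw [Real.rpow_def_of_pos hq0, hu, ← Real.exp_neg]
    congr 1
    ring
  have hE1 : u + 1 ≤ Real.exp u := Real.add_one_le_exp u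
  have hE2 : a * u + 1 ≤ Real.exp (a * u) := Real.add_one_le_exp _
  -- `e^u ≥ 1 + u` turns into `1 - e^{-u} ≥ u / (1 + u)`
  have hden : u / (1 + u) ≤ 1 - q ^ M := by
    rw [e1]
    have : (Real.exp u)⁻¹ ≤ (1 + u)⁻¹ := by
      apply inv_anti₀ <;> linarith
    have h3 : u / (1 + u) = 1 - (1 + u)⁻¹ := by field_simp; ring
    linarith
  have hden0 : 0 < u / (1 + u) := by positivity
  have hq : (1 - q) / (1 - q ^ M) ≤ (1 + u) / M := by
    rw [div_le_div_iff₀ (hden0.trans_le hden) hM]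
    calc (1 - q) * M ≤ u := by linarith
      _ = (1 + u) * (u / (1 + u)) := by field_simp
      _ ≤ _ := by gcongr
  have hfac : q ^ (a * M) * (1 + u) ≤ 1 + 1 / a := by
    rw [e2, inv_mul_le_iff₀ (Real.exp_pos _)]
    calc 1 + u ≤ (a * u + 1) * (1 + 1 / a) := by
          have : (a * u + 1) * (1 + 1 / a) = 1 + u + a * u + 1 / a := by field_simp; ring
          rw [this]
          have : 0 < a * u := by positivity
          have : 0 < 1 / a := by positivity
          linarith
      _ ≤ _ := by gcongr
  calc _ ≤ q ^ (a * M) * ((1 + u) / M) := by gcongr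
    _ = q ^ (a * M) * (1 + u) / M := by ring
    _ ≤ _ := by gcongr

theorem one_sub_rpow_div_le_norm_qNum {q : ℝ} (hq0 : 0 < q) (hq1 : q < 1) (w : ℂ) :
    (1 - q ^ w.re) / (1 - q) ≤ ‖qNum q w‖ := by
  have h1 : ‖(1 : ℂ) - (q : ℂ)‖ = 1 - q := by
    rw [← Complex.ofReal_one, ← Complex.ofReal_sub, Complex.norm_real, Real.norm_eq_abs,
      abs_of_pos (by linarith)]
  have h2 : 1 - q ^ w.re ≤ ‖(1 : ℂ) - (q : ℂ) ^ w‖ := by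
    have := norm_sub_norm_le (1 : ℂ) ((q : ℂ) ^ w)
    rwa [norm_one, Complex.norm_cpow_eq_rpow_re_of_pos hq0] at this
  rw [qNum, norm_div, h1]
  have : 0 < 1 - q := by linarith
  gcongr

/-- The exponential factor accounts for the argument of `w`, at most `π` in absolute value. -/
theorem inv_norm_cpow_le {w : ℂ} (hw : w ≠ 0) (s : ℂ) :
    ‖w ^ s‖⁻¹ ≤ Real.exp (Real.pi * |s.im|) * (‖w‖ ^ s.re)⁻¹ := by
  rw [Complex.norm_cpow_of_ne_zero hw, inv_div, div_eq_mul_inv]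
  have : Complex.arg w * s.im ≤ Real.pi * |s.im| := by
    calc _ ≤ |Complex.arg w * s.im| := le_abs_self _
      _ = |Complex.arg w| * |s.im| := abs_mul _ _
      _ ≤ _ := by gcongr; exact Complex.abs_arg_le_pi w
  gcongr

/-- The exponent has real part at least `Nδ = δ(N + x) - xδ`; the constant `2^{xδ}` bounds
`q^{-xδ}` for `q ≥ 1/2`. -/
theorem norm_numerator_le {q : ℝ} (hq : 1 / 2 ≤ q) (hq1 : q < 1) {r : ℕ} (ν : ℕ) (s : ℂ)
    {x δ : ℝ} (hx : 0 < x) (hδ : δ = s.re - ν - (r - 1)) (hδ0 : 0 < δ) (f : Fin r → ℕ) :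
    ‖(q : ℂ) ^ (∑ i : Fin r, (f i : ℂ) * (s - (ν : ℂ) - (i : ℕ)))‖
      ≤ 2 ^ (x * δ) * q ^ (δ * (((∑ i, f i : ℕ) : ℝ) + x)) := by
  have hq0 : 0 < q := by linarith
  rw [Complex.norm_cpow_eq_rpow_re_of_pos hq0]
  have h1 : ((∑ i, f i : ℕ) : ℝ) * δ
      ≤ (∑ i : Fin r, (f i : ℂ) * (s - (ν : ℂ) - (i : ℕ))).re := by
    rw [Complex.re_sum]
    push_cast
    rw [Finset.sum_mul]
    refine Finset.sum_le_sum fun i _ => ?_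
    have hi : ((i : ℕ) : ℝ) + 1 ≤ r := by exact_mod_cast i.2
    have h2 : ((f i : ℂ) * (s - (ν : ℂ) - (i : ℕ))).re = f i * (s.re - ν - (i : ℕ)) := by
      simp
    rw [h2, hδ]
    gcongr
    linarith
  have h2 : (1 : ℝ) ≤ 2 ^ (x * δ) * q ^ (x * δ) := by
    rw [← Real.mul_rpow (by norm_num) hq0.le]
    exact Real.one_le_rpow (by linarith) (by positivity)
  calc _ ≤ q ^ (((∑ i, f i : ℕ) : ℝ) * δ) :=
        Real.rpow_le_rpow_of_exponent_ge hq0 hq1.le h1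
    _ ≤ (2 ^ (x * δ) * q ^ (x * δ)) * q ^ (((∑ i, f i : ℕ) : ℝ) * δ) :=
        le_mul_of_one_le_left (by positivity) h2
    _ = _ := by
        rw [mul_assoc, ← Real.rpow_add hq0]
        congr 2
        ring

/-- The majorant for dominated convergence: its constant does not depend on `q` or `f`. -/
theorem norm_summand_le {q : ℝ} (hq : 1 / 2 ≤ q) (hq1 : q < 1) {r : ℕ} (ν : ℕ) (s z : ℂ)
    (hz : 0 < z.re) {δ : ℝ} (hδ : δ = s.re - ν - (r - 1)) (hδ0 : 0 < δ) (hσ : 0 < s.re)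
    (f : Fin r → ℕ) :
    ‖(q : ℂ) ^ (∑ i : Fin r, (f i : ℂ) * (s - (ν : ℂ) - (i : ℕ)))
      / (qNum q (((∑ i : Fin r, f i : ℕ) : ℂ) + z)) ^ s‖
      ≤ 2 ^ (z.re * δ) * Real.exp (Real.pi * |s.im|) * (1 + 1 / (δ / s.re)) ^ s.re
        * (((∑ i, f i : ℕ) : ℝ) + z.re) ^ (-s.re) := by
  have hq0 : 0 < q := by linarith
  have hA := norm_numerator_le hq hq1 ν s hz hδ hδ0 f
  have hB := one_sub_rpow_div_le_norm_qNum hq0 hq1 (((∑ i : Fin r, f i : ℕ) : ℂ) + z)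
  rw [Complex.add_re, Complex.natCast_re] at hB
  generalize ((∑ i : Fin r, f i : ℕ) : ℂ) + z = w at *
  have hM : 0 < ((∑ i, f i : ℕ) : ℝ) + z.re := by positivity
  generalize ((∑ i, f i : ℕ) : ℝ) + z.re = M at *
  have hqM : 0 < 1 - q ^ M := sub_pos.2 (Real.rpow_lt_one hq0.le hq1 hM)
  have hq1' : 0 < 1 - q := by linarith
  have hB0 : 0 < (1 - q ^ M) / (1 - q) := by positivity
  have hw : qNum q w ≠ 0 := norm_pos_iff.1 (hB0.trans_le hB)
  have hD : ‖qNum q w ^ s‖⁻¹ ≤ Real.exp (Real.pi * |s.im|) * ((1 - q) / (1 - q ^ M)) ^ s.re := by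
    refine (inv_norm_cpow_le hw s).trans ?_
    rw [← inv_div (1 - q ^ M), Real.inv_rpow hB0.le]
    gcongr
  have hK := rpow_mul_one_sub_div_le hq0 hq1 hM (div_pos hδ0 hσ)
  have hP : q ^ (δ * M) = (q ^ (δ / s.re * M)) ^ s.re := by
    rw [← Real.rpow_mul hq0.le]
    congr 1
    field_simp
  rw [norm_div, div_eq_mul_inv]
  calc _ ≤ (2 ^ (z.re * δ) * q ^ (δ * M))
        * (Real.exp (Real.pi * |s.im|) * ((1 - q) / (1 - q ^ M)) ^ s.re) := by gcongr
    _ = 2 ^ (z.re * δ) * Real.exp (Real.pi * |s.im|)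
        * (q ^ (δ / s.re * M) * ((1 - q) / (1 - q ^ M))) ^ s.re := by
      rw [Real.mul_rpow (by positivity) (by positivity), hP]
      ring
    _ ≤ 2 ^ (z.re * δ) * Real.exp (Real.pi * |s.im|)
        * ((1 + 1 / (δ / s.re)) / M) ^ s.re := by gcongr
    _ = _ := by
      rw [Real.div_rpow (by positivity) hM.le, Real.rpow_neg hM.le]
      ring

/-- `[w]_q` is the difference quotient at `q = 1` of `q ↦ q^w`, whose derivative there is `w`. -/
theorem tendsto_qNum (w : ℂ) :
    Filter.Tendsto (fun q : ℝ => qNum q w) (nhdsWithin 1 (Set.Ioo 0 1)) (nhds w) := by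
  have h1 : HasDerivAt (fun y : ℂ => y ^ w) w 1 := by
    have := (hasDerivAt_id (1 : ℂ)).cpow_const (c := w) (by simp)
    simpa using this
  have h2 : HasDerivAt (fun q : ℝ => (q : ℂ) ^ w) w (1 : ℝ) := by
    have h1' : HasDerivAt (fun y : ℂ => y ^ w) w ((1 : ℝ) : ℂ) := by simpa using h1
    exact h1'.comp_ofReal
  have h3 := (hasDerivAt_iff_tendsto_slope.1 h2).mono_left
    (nhdsWithin_mono 1 (fun q (hq : q ∈ Set.Ioo (0 : ℝ) 1) => hq.2.ne))
  refine h3.congr fun q => ?_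
  rw [slope_def_module, qNum, Complex.real_smul]
  push_cast
  rw [Complex.one_cpow, ← neg_sub (1 : ℂ) ((q : ℂ) ^ w), ← neg_sub (1 : ℂ) (q : ℂ), inv_neg,
    neg_mul_neg, mul_comm, div_eq_mul_inv]

theorem tendsto_summand (e s w : ℂ) (hw : 0 < w.re) :
    Filter.Tendsto (fun q : ℝ => (q : ℂ) ^ e / qNum q w ^ s)
      (nhdsWithin 1 (Set.Ioo 0 1)) (nhds (w ^ (-s))) := by
  have h1 : Filter.Tendsto (fun q : ℝ => (q : ℂ) ^ e) (nhdsWithin 1 (Set.Ioo 0 1)) (nhds 1) := by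
    have h : ContinuousAt (fun q : ℝ => (q : ℂ) ^ e) 1 :=
      (Complex.continuous_ofReal.continuousAt).cpow continuousAt_const (by simp)
    have h' := h.tendsto
    simp only [Complex.ofReal_one, Complex.one_cpow] at h'
    exact h'.mono_left nhdsWithin_le_nhds
  have hw0 : w ≠ 0 := by
    rintro rfl
    simp at hw
  have h2 := (tendsto_qNum w).cpow (tendsto_const_nhds (x := s)) (Or.inl hw)
  have h3 := h1.div h2 ((Complex.cpow_ne_zero_iff).2 (Or.inl hw0))
  rwa [one_div, ← Complex.cpow_neg] at h3

/-- For integers `r, ν ≥ 1`, `Re z > 0` and `Re s > r − 1 + ν`: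
`lim_{q↑1} ζ_{q,r}(s, s−ν, z) = ζ_r(s,z)`, the limit being over real `q`
increasing to `1` (within `(0,1)`). -/
theorem tendsto_zetaQ_zetaBarnes (r ν : ℕ) (hr : 1 ≤ r) (hν : 1 ≤ ν) (s z : ℂ)
    (hz : 0 < z.re) (hs : (r : ℝ) - 1 + ν < s.re) :
    Filter.Tendsto (fun q : ℝ => zetaQ q r s (s - (ν : ℂ)) z)
      (nhdsWithin 1 (Set.Ioo 0 1)) (nhds (zetaBarnes r s z)) := by
  have hν' : (1 : ℝ) ≤ ν := by exact_mod_cast hν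
  have hr' : (1 : ℝ) ≤ r := by exact_mod_cast hr
  have hδ0 : 0 < s.re - ν - (r - 1) := by linarith
  unfold zetaQ zetaBarnes
  refine tendsto_tsum_of_dominated_convergence
    ((summable_sum_add_rpow hr hz (σ := s.re) (by linarith)).mul_left
      (2 ^ (z.re * (s.re - ν - (r - 1))) * Real.exp (Real.pi * |s.im|)
        * (1 + 1 / ((s.re - ν - (r - 1)) / s.re)) ^ s.re))
    (fun f => tendsto_summand _ s _ ?_) ?_
  · rw [Complex.add_re, Complex.natCast_re]
    positivity
  · have h1 : ∀ᶠ q : ℝ in nhdsWithin 1 (Set.Ioo 0 1), 1 / 2 ≤ q :=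
      nhdsWithin_le_nhds (Ici_mem_nhds (by norm_num))
    filter_upwards [h1, self_mem_nhdsWithin] with q hq hq1 f
    exact norm_summand_le hq hq1.2 ν s z hz rfl hδ0 (by linarith) f
end

section
/- Let q be real with 0 < q < 1 and let n ≥ 1 be an integer. Then Γ̃_q(n+1) = q^{−∑_{k=1}^{n} k·q^{−k}} · ∏_{k=1}^{n} ([k]_q)^{q^{−k}}; equivalently, F_q(n+1) = −(log q)·∑_{k=1}^{n} k·q^{−k} + ∑_{k=1}^{n} q^{−k} · log [k]_q. -/
/-!
The function `F_q` vanishes at `z = 1` and satisfies the functional equation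
`F_q(z+1) = F_q(z) − z q^{−z} log q + q^{−z} log [z]_q` for `z > 0`; iterating it gives the
formula at `z = n + 1`, and exponentiating gives the product formula for `Γ̃_q`.

The functional equation holds because, with `x = q^z`, the general terms of the series at `z + 1`
and at `z` differ by `−x^m/(m+1)`, `m ≥ 1`, and the logarithm series yields
`∑_{m ≥ 1} x^m/(m+1) = −log(1−x)/x − 1`. The remaining terms are elementary.
Summability at `z = 1, 2, 3, …` is carried along the same induction: the series at `z = 1` is
identically zero, and each step adds a convergent power series.
-/

/-- The logarithm `F_q(z) = log Γ̃_q(z)` of the `q`-gamma function associated with the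
`q`-Hurwitz zeta function, given by its explicit closed form: for real `z > 0`,
`F_q(z) = ∑_{n=2}^∞ (1/n)(q^{z(n−1)} − q^{n−1})/(1 − q^{n−1}) − z + 1
  + ((q^{−z}(1 − (1−q)z) − 1)/(1−q)²) q log q + ((1 − q^{1−z})/(1−q)) log(1−q)`
(real powers of `q` via `rpow`). -/
noncomputable def Fq (q z : ℝ) : ℝ :=
  (∑' n : ℕ, (1 / ((n : ℝ) + 2)) *
      (q ^ (z * ((n : ℝ) + 1)) - q ^ ((n : ℝ) + 1)) / (1 - q ^ ((n : ℝ) + 1)))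
    - z + 1
    + ((q ^ (-z) * (1 - (1 - q) * z) - 1) / (1 - q) ^ 2) * q * Real.log q
    + ((1 - q ^ (1 - z)) / (1 - q)) * Real.log (1 - q)

/-- The `q`-gamma function `Γ̃_q(z) = exp F_q(z)` associated with the `q`-Hurwitz zeta
function. -/
noncomputable def GammaQ (q z : ℝ) : ℝ := Real.exp (Fq q z)

/-- The general term of the series in `Fq q z`. -/
noncomputable def fqTerm (q z : ℝ) (n : ℕ) : ℝ :=
  (1 / ((n : ℝ) + 2)) *
      (q ^ (z * ((n : ℝ) + 1)) - q ^ ((n : ℝ) + 1)) / (1 - q ^ ((n : ℝ) + 1))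

lemma hasSum_pow_succ_div_add_two (x : ℝ) (hx0 : 0 < x) (hx1 : x < 1) :
    HasSum (fun n : ℕ => x ^ (n + 1) / ((n : ℝ) + 2)) (-Real.log (1 - x) / x - 1) := by
  have h := Real.hasSum_pow_div_log_of_abs_lt_one (x := x) (by rwa [abs_of_pos hx0])
  rw [← hasSum_nat_add_iff' 1] at h
  have h2 := h.div_const x
  have hx : x ≠ 0 := hx0.ne'
  have e1 : (fun n : ℕ => x ^ (n + 1) / ((n : ℝ) + 2))
      = fun n : ℕ => x ^ (n + 1 + 1) / (((n + 1 : ℕ) : ℝ) + 1) / x := by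
    funext n
    have h3 : (n : ℝ) + 1 + 1 ≠ 0 := by positivity
    have h4 : (n : ℝ) + 2 = (n : ℝ) + 1 + 1 := by ring
    push_cast
    rw [h4]
    field_simp
    ring
  have e2 : -Real.log (1 - x) / x - 1
      = (-Real.log (1 - x) - ∑ i ∈ Finset.range 1, x ^ (i + 1) / ((i : ℝ) + 1)) / x := by
    simp only [Finset.sum_range_one, Nat.cast_zero, zero_add, pow_one, div_one]
    field_simp
  rw [e1, e2]
  exact h2

lemma fqTerm_add_one (q : ℝ) (hq0 : 0 < q) (hq1 : q < 1) (z : ℝ) (n : ℕ) :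
    fqTerm q (z + 1) n = fqTerm q z n - (q ^ z) ^ (n + 1) / ((n : ℝ) + 2) := by
  unfold fqTerm
  have h1 : q ^ ((n : ℝ) + 1) < 1 := Real.rpow_lt_one hq0.le hq1 (by positivity)
  have h2 : 1 - q ^ ((n : ℝ) + 1) ≠ 0 := by linarith
  have h3 : (n : ℝ) + 2 ≠ 0 := by positivity
  have h4 : q ^ (z * ((n : ℝ) + 1)) = (q ^ z) ^ (n + 1) := by
    rw [Real.rpow_mul hq0.le]
    exact_mod_cast Real.rpow_natCast (q ^ z) (n + 1)
  rw [add_mul, one_mul, Real.rpow_add hq0, h4]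
  field_simp
  ring

/-- The functional equation of `F_q`, with summability passed on from `z` to `z + 1`. -/
lemma Fq_add_one (q : ℝ) (hq0 : 0 < q) (hq1 : q < 1) (z : ℝ) (hz : 0 < z)
    (hs : Summable (fqTerm q z)) :
    Summable (fqTerm q (z + 1)) ∧
    Fq q (z + 1) = Fq q z - Real.log q * (z * q ^ (-z))
      + q ^ (-z) * Real.log ((1 - q ^ z) / (1 - q)) := by
  have hx0 : 0 < q ^ z := Real.rpow_pos_of_pos hq0 z
  have hx1 : q ^ z < 1 := Real.rpow_lt_one hq0.le hq1 hz
  have h := hs.hasSum.sub (hasSum_pow_succ_div_add_two (q ^ z) hx0 hx1)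
  simp_rw [← fqTerm_add_one q hq0 hq1] at h
  refine ⟨h.summable, ?_⟩
  have hF : ∀ w, Fq q w = (∑' n : ℕ, fqTerm q w n) - w + 1
    + ((q ^ (-w) * (1 - (1 - q) * w) - 1) / (1 - q) ^ 2) * q * Real.log q
    + ((1 - q ^ (1 - w)) / (1 - q)) * Real.log (1 - q) := fun _ => rfl
  have hq : 1 - q ≠ 0 := by linarith
  rw [hF, hF, h.tsum_eq, Real.log_div (by linarith) hq]
  have e1 : q ^ (-(z + 1)) = (q ^ z)⁻¹ / q := by
    rw [Real.rpow_neg hq0.le, Real.rpow_add hq0, Real.rpow_one, mul_inv, div_eq_mul_inv]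
  have e2 : q ^ (1 - (z + 1)) = (q ^ z)⁻¹ := by
    rw [← Real.rpow_neg hq0.le]; congr 1; ring
  have e3 : q ^ (1 - z) = q * (q ^ z)⁻¹ := by
    rw [Real.rpow_sub hq0, Real.rpow_one, div_eq_mul_inv]
  rw [e1, e2, e3, Real.rpow_neg hq0.le]
  have hx := hx0.ne'
  have hq' := hq0.ne'
  field_simp
  ring

lemma fqTerm_one (q : ℝ) : fqTerm q 1 = 0 := by
  funext n
  simp [fqTerm]

lemma Fq_one (q : ℝ) (hq0 : 0 < q) : Fq q 1 = 0 := by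
  have hq' := hq0.ne'
  simp [Fq, Real.rpow_neg hq0.le, hq']

lemma Fq_nat_succ (q : ℝ) (hq0 : 0 < q) (hq1 : q < 1) (n : ℕ) :
    Summable (fqTerm q ((n : ℝ) + 1)) ∧
    Fq q ((n : ℝ) + 1)
      = -Real.log q * (∑ k ∈ Finset.Icc 1 n, (k : ℝ) * q ^ (-(k : ℝ)))
        + ∑ k ∈ Finset.Icc 1 n, q ^ (-(k : ℝ)) * Real.log ((1 - q ^ (k : ℝ)) / (1 - q)) := by
  induction n with
  | zero =>
    refine ⟨?_, ?_⟩
    · simp only [Nat.cast_zero, zero_add, fqTerm_one]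
      exact summable_zero
    · simp [Fq_one q hq0]
  | succ n ih =>
    obtain ⟨hs, hF⟩ := ih
    obtain ⟨hs', hF'⟩ := Fq_add_one q hq0 hq1 ((n : ℝ) + 1) (by positivity) hs
    push_cast
    refine ⟨hs', ?_⟩
    rw [hF', hF, Finset.sum_Icc_succ_top (by omega), Finset.sum_Icc_succ_top (by omega)]
    push_cast
    ring

/-- For `0 < q < 1` and an integer `n ≥ 1`:
`Γ̃_q(n+1) = q^{−∑_{k=1}^n k q^{−k}} ∏_{k=1}^n ([k]_q)^{q^{−k}}`; equivalently,
`F_q(n+1) = −(log q) ∑_{k=1}^n k q^{−k} + ∑_{k=1}^n q^{−k} log [k]_q`. -/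
theorem GammaQ_nat_succ (q : ℝ) (hq0 : 0 < q) (hq1 : q < 1) (n : ℕ) (hn : 1 ≤ n) :
    GammaQ q ((n : ℝ) + 1)
      = q ^ (-(∑ k ∈ Finset.Icc 1 n, (k : ℝ) * q ^ (-(k : ℝ)))) *
          ∏ k ∈ Finset.Icc 1 n, ((1 - q ^ (k : ℝ)) / (1 - q)) ^ (q ^ (-(k : ℝ))) ∧
    Fq q ((n : ℝ) + 1)
      = -Real.log q * (∑ k ∈ Finset.Icc 1 n, (k : ℝ) * q ^ (-(k : ℝ)))
        + ∑ k ∈ Finset.Icc 1 n, q ^ (-(k : ℝ)) * Real.log ((1 - q ^ (k : ℝ)) / (1 - q)) := by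
  have hF := (Fq_nat_succ q hq0 hq1 n).2
  refine ⟨?_, hF⟩
  rw [GammaQ, hF, Real.exp_add, Real.exp_sum, Real.rpow_def_of_pos hq0]
  congr 1
  · congr 1
    ring
  · refine Finset.prod_congr rfl fun k hk => ?_
    have hk1 : 0 < k := (Finset.mem_Icc.mp hk).1
    have hlt : q ^ (k : ℝ) < 1 := Real.rpow_lt_one hq0.le hq1 (by exact_mod_cast hk1)
    rw [Real.rpow_def_of_pos (div_pos (by linarith) (by linarith)), mul_comm]
end
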